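/- arXiv:1105.1586 — 5 statements merged into one kernel-verified Lean document; each statement's English description precedes it below -/
import Mathlib

section
/- For all k-connected graphs G and H each with at least n vertices, the treewidth of the cartesian product G □ H is at least k(n − 2k + 2) − 1. -/
open SimpleGraph

/-- A tree decomposition of a graph `G`: a tree together with bags of vertices
indexed by the tree, covering all edges, such that for each vertex the set of
bags containing it induces a non-empty connected subtree. -/
structure TreeDecomposition {V : Type*} (G : SimpleGraph V) where
  ι : Type
  fintype_ι : Fintype ι
  tree : SimpleGraph ι
  isTree : tree.IsTree
  bag : ι → Finset V
  covers_edge : ∀ ⦃v w : V⦄, G.Adj v w → ∃ x : ι, v ∈ bag x ∧ w ∈ bag x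
  support_connected : ∀ v : V, (tree.induce {x : ι | v ∈ bag x}).Connected

/-- The width of a tree decomposition: maximum bag size minus one. -/
noncomputable def TreeDecomposition.width {V : Type*} {G : SimpleGraph V}
    (d : TreeDecomposition G) : ℕ :=
  letI := d.fintype_ι
  (Finset.univ.sup fun x : d.ι => (d.bag x).card) - 1

/-- The treewidth of a graph: minimum width of a tree decomposition. -/
noncomputable def treewidth {V : Type*} (G : SimpleGraph V) : ℕ :=
  sInf {w : ℕ | ∃ d : TreeDecomposition G, d.width = w}

/-- A graph is `k`-connected if it has more than `k` vertices and remains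
connected after deletion of any fewer than `k` vertices. -/
def IsKConnected {V : Type*} [Fintype V] (k : ℕ) (G : SimpleGraph V) : Prop :=
  k < Fintype.card V ∧
    ∀ S : Finset V, S.card < k → ((⊤ : G.Subgraph).deleteVerts ↑S).Connected

/-!
For any tree decomposition, some bag meets every set of a given bramble: the nodes whose bags meet
a fixed bramble set span a subtree, these subtrees pairwise intersect, and subtrees of a finite tree
have the Helly property. Hence if every set of fewer than `r` vertices misses some bramble set, the
treewidth is at least `r - 1`.

In `G □ H` delete a set `S` of fewer than `r` vertices. Few columns contain many points of `S`, and
likewise for rows; each of the remaining sparse lines stays connected after the deletion, being a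
copy of `G` or `H` minus few vertices. There are so many sparse lines that any two sparse columns
are joined off `S` by a sparse row, and that some sparse column for `S` meets some sparse row for
another such set `T` outside `S ∪ T`. So the unions of sparse lines minus the deleted sets form a
bramble.
-/

section Trees

variable {ι V : Type*} {T : SimpleGraph ι}

theorem exists_apply_apply_eq_of_isTree [Finite ι] (hT : T.IsTree) {f : ι → ι}
    (hf : ∀ x, T.Adj x (f x)) : ∃ x, f (f x) = x := by
  classical
  have := Fintype.ofFinite ι
  have hcard : T.edgeFinset.card < (Finset.univ : Finset ι).card := by
    rw [Finset.card_univ, ← hT.card_edgeFinset]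
    exact Nat.lt_succ_self _
  obtain ⟨x, -, y, -, hxy, hedge⟩ := Finset.exists_ne_map_eq_of_card_lt_of_maps_to hcard
    (f := fun x => s(x, f x)) fun x _ => by simpa using hf x
  obtain ⟨rfl, -⟩ | ⟨hx, hy⟩ := Sym2.eq_iff.1 hedge
  · exact absurd rfl hxy
  · exact ⟨x, by rw [hy, ← hx]⟩

theorem exists_adj_forall_reachable_deleteEdges (hT : T.Connected) {A : Set ι}
    (hA : (T.induce A).Preconnected) (hne : A.Nonempty) {x : ι} (hx : x ∉ A) :
    ∃ y, T.Adj x y ∧ ∀ z ∈ A, (T.deleteEdges {s(x, y)}).Reachable y z := by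
  obtain ⟨z₀, hz₀⟩ := hne
  obtain ⟨p, hp⟩ := (hT.preconnected x z₀).exists_isPath
  cases p with
  | nil => exact absurd hz₀ hx
  | @cons _ y _ hxy q =>
    have hxq := ((Walk.cons_isPath_iff hxy q).1 hp).2
    refine ⟨y, hxy, fun z hz => ?_⟩
    have hyz₀ : (T.deleteEdges {s(x, y)}).Reachable y z₀ :=
      reachable_deleteEdges_iff_exists_walk.2
        ⟨q, fun he => hxq (q.fst_mem_support_of_mem_edges he)⟩
    let toDeleted : T.induce A →g T.deleteEdges {s(x, y)} :=
      { toFun := Subtype.val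
        map_rel' := fun {a b} hab => by
          refine deleteEdges_adj.2 ⟨hab, fun he => ?_⟩
          obtain ⟨ha, -⟩ | ⟨-, hb⟩ := Sym2.eq_iff.1 (Set.mem_singleton_iff.1 he)
          · exact hx (ha ▸ a.2)
          · exact hx (hb ▸ b.2) }
    exact hyz₀.trans ((hA ⟨z₀, hz₀⟩ ⟨z, hz⟩).map toDeleted)

theorem sInter_nonempty_of_isTree [Finite ι] (hT : T.IsTree) {𝒜 : Set (Set ι)}
    (hconn : ∀ A ∈ 𝒜, (T.induce A).Preconnected)
    (hinter : ∀ A ∈ 𝒜, ∀ B ∈ 𝒜, (A ∩ B).Nonempty) : (⋂₀ 𝒜).Nonempty := by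
  by_contra hempty
  have hmiss (x : ι) : ∃ A ∈ 𝒜, x ∉ A := by
    by_contra! hx
    exact hempty ⟨x, hx⟩
  choose A hA hxA using hmiss
  have hne (x : ι) : (A x).Nonempty := (hinter _ (hA x) _ (hA x)).mono Set.inter_subset_left
  choose f hadj hreach using fun x =>
    exists_adj_forall_reachable_deleteEdges hT.connected (hconn _ (hA x)) (hne x) (hxA x)
  obtain ⟨x, hx⟩ := exists_apply_apply_eq_of_isTree hT hadj
  obtain ⟨z, hz, hz'⟩ := hinter _ (hA x) _ (hA (f x))
  have hfz := hreach x z hz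
  have hxz := hreach (f x) z hz'
  rw [hx, Sym2.eq_swap] at hxz
  exact isAcyclic_iff_forall_adj_isBridge.1 hT.isAcyclic (hadj x) (hxz.trans hfz.symm)

theorem preconnected_induce_biUnion {G : SimpleGraph V} {B : Set V} {s : V → Set ι}
    (hB : (G.induce B).Preconnected) (hs : ∀ v ∈ B, (T.induce (s v)).Preconnected)
    (hadj : ∀ v ∈ B, ∀ w ∈ B, G.Adj v w → (s v ∩ s w).Nonempty) :
    (T.induce (⋃ v ∈ B, s v)).Preconnected := by
  have hmem {v x} (hv : v ∈ B) (hx : x ∈ s v) : x ∈ ⋃ v ∈ B, s v := Set.mem_biUnion hv hx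
  have hfiber {v x y} (hv : v ∈ B) (hx : x ∈ s v) (hy : y ∈ s v) :
      (T.induce (⋃ v ∈ B, s v)).Reachable ⟨x, hmem hv hx⟩ ⟨y, hmem hv hy⟩ :=
    (hs v hv ⟨x, hx⟩ ⟨y, hy⟩).map (T.induceHomOfLE (Set.subset_biUnion_of_mem hv)).toHom
  have hwalk {v w : B} : (G.induce B).Walk v w → ∀ x (hx : x ∈ s v) y (hy : y ∈ s w),
      (T.induce (⋃ v ∈ B, s v)).Reachable ⟨x, hmem v.2 hx⟩ ⟨y, hmem w.2 hy⟩ := by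
    intro p
    induction p with
    | @nil v => exact fun x hx y hy => hfiber v.2 hx hy
    | @cons u v w huv _ ih =>
      intro x hx y hy
      obtain ⟨z, hzu, hzv⟩ := hadj u u.2 v v.2 huv
      exact (hfiber u.2 hx hzu).trans (ih z hzv y hy)
  rintro ⟨x, hx⟩ ⟨y, hy⟩
  obtain ⟨v, hv, hxv⟩ := Set.mem_iUnion₂.1 hx
  obtain ⟨w, hw, hyw⟩ := Set.mem_iUnion₂.1 hy
  obtain ⟨p⟩ := hB ⟨v, hv⟩ ⟨w, hw⟩
  exact hwalk p x hxv y hyw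

end Trees

section Brambles

variable {V : Type*} {G : SimpleGraph V}

/-- A bramble in `G`: a family of connected vertex sets any two of which touch, that is, share a
vertex or are joined by an edge. Brambles are the obstructions to small treewidth. -/
structure IsBramble_s0 (G : SimpleGraph V) (𝓑 : Set (Set V)) : Prop where
  connected : ∀ B ∈ 𝓑, (G.induce B).Connected
  touch : ∀ B ∈ 𝓑, ∀ C ∈ 𝓑, ∃ u ∈ B, ∃ v ∈ C, u = v ∨ G.Adj u v

/-- The nodes of a tree decomposition whose bags meet the vertex set `B`. -/
def TreeDecomposition.nodesMeeting (d : TreeDecomposition G) (B : Set V) : Set d.ι :=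
  ⋃ v ∈ B, {x | v ∈ d.bag x}

namespace TreeDecomposition

variable (d : TreeDecomposition G)

theorem mem_nodesMeeting {B : Set V} {x : d.ι} : x ∈ d.nodesMeeting B ↔ ∃ v ∈ B, v ∈ d.bag x := by
  simp only [nodesMeeting, Set.mem_iUnion₂, Set.mem_ofPred_eq, exists_prop]

theorem exists_mem_bag (v : V) : ∃ x, v ∈ d.bag x :=
  nonempty_subtype.1 (d.support_connected v).nonempty

theorem preconnected_induce_nodesMeeting {B : Set V} (hB : (G.induce B).Preconnected) :
    (d.tree.induce (d.nodesMeeting B)).Preconnected :=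
  preconnected_induce_biUnion hB (fun v _ => (d.support_connected v).preconnected)
    fun _ _ _ _ hvw => d.covers_edge hvw

theorem card_bag_le_width_add_one (x : d.ι) : (d.bag x).card ≤ d.width + 1 := by
  let _ := d.fintype_ι
  have hsup := Finset.le_sup (f := fun x => (d.bag x).card) (Finset.mem_univ x)
  change (d.bag x).card ≤ (Finset.univ.sup fun x => (d.bag x).card) - 1 + 1
  omega

end TreeDecomposition

theorem IsBramble_s0.exists_bag_forall_exists_mem {𝓑 : Set (Set V)} (h𝓑 : IsBramble_s0 G 𝓑)
    (d : TreeDecomposition G) : ∃ x, ∀ B ∈ 𝓑, ∃ v ∈ B, v ∈ d.bag x := by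
  have := d.fintype_ι
  have hinter : ∀ B ∈ 𝓑, ∀ C ∈ 𝓑, (d.nodesMeeting B ∩ d.nodesMeeting C).Nonempty := by
    intro B hB C hC
    obtain ⟨u, hu, v, hv, huv⟩ := h𝓑.touch B hB C hC
    obtain ⟨x, hux, hvx⟩ : ∃ x, u ∈ d.bag x ∧ v ∈ d.bag x := by
      obtain rfl | huv := huv
      · simpa only [and_self] using d.exists_mem_bag u
      · exact d.covers_edge huv
    exact ⟨x, d.mem_nodesMeeting.2 ⟨u, hu, hux⟩, d.mem_nodesMeeting.2 ⟨v, hv, hvx⟩⟩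
  obtain ⟨x, hx⟩ := sInter_nonempty_of_isTree d.isTree (𝒜 := d.nodesMeeting '' 𝓑)
    (Set.forall_mem_image.2 fun B hB =>
      d.preconnected_induce_nodesMeeting (h𝓑.connected B hB).preconnected)
    (Set.forall_mem_image.2 fun B hB => Set.forall_mem_image.2 (hinter B hB))
  exact ⟨x, fun B hB => d.mem_nodesMeeting.1 (hx _ (Set.mem_image_of_mem _ hB))⟩

/-- The one-bag decomposition, which guarantees that the infimum defining `treewidth` is attained
for finite graphs. -/
def TreeDecomposition.trivial [Fintype V] (G : SimpleGraph V) : TreeDecomposition G where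
  ι := Unit
  fintype_ι := inferInstance
  tree := ⊥
  isTree := IsTree.of_subsingleton
  bag _ := Finset.univ
  covers_edge v w _ := ⟨(), Finset.mem_univ v, Finset.mem_univ w⟩
  support_connected v :=
    have : Nonempty {_x : Unit | v ∈ (Finset.univ : Finset V)} := ⟨⟨(), Finset.mem_univ v⟩⟩
    ⟨Preconnected.of_subsingleton⟩

theorem exists_width_eq_treewidth [Finite V] (G : SimpleGraph V) :
    ∃ d : TreeDecomposition G, d.width = treewidth G := by
  have := Fintype.ofFinite V
  exact Nat.sInf_mem (s := {w | ∃ d : TreeDecomposition G, d.width = w})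
    ⟨_, TreeDecomposition.trivial G, rfl⟩

theorem IsBramble_s0.le_treewidth_add_one [Finite V] {𝓑 : Set (Set V)} (h𝓑 : IsBramble_s0 G 𝓑) {r : ℕ}
    (hr : ∀ S : Finset V, S.card < r → ∃ B ∈ 𝓑, Disjoint (S : Set V) B) :
    r ≤ treewidth G + 1 := by
  obtain ⟨d, hd⟩ := exists_width_eq_treewidth G
  obtain ⟨x, hx⟩ := h𝓑.exists_bag_forall_exists_mem d
  by_contra! hlt
  have hcard : (d.bag x).card < r := (d.card_bag_le_width_add_one x).trans_lt (hd ▸ hlt)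
  obtain ⟨B, hB, hdisj⟩ := hr (d.bag x) hcard
  obtain ⟨v, hvB, hvx⟩ := hx B hB
  exact Set.disjoint_left.1 hdisj hvx hvB

end Brambles

section SparseFibers

open Finset

variable {γ ι : Type*}

theorem exists_forall_ne_of_card_lt {T : Finset γ} {R : Finset ι} (h : #T < #R) (f : γ → ι) :
    ∃ i ∈ R, ∀ t ∈ T, f t ≠ i := by
  classical
  obtain ⟨i, hi, hiT⟩ := exists_mem_notMem_of_card_lt_card ((card_image_le (f := f)).trans_lt h)
  exact ⟨i, hi, fun t ht hti => hiT (mem_image.2 ⟨t, ht, hti⟩)⟩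

variable [DecidableEq ι]

/-- The points whose fibre under `f` contains fewer than `k` elements of `S`. For a projection of a
product these are the columns or rows that are nearly disjoint from `S`. -/
def sparseFibers [Fintype ι] (f : γ → ι) (k : ℕ) (S : Finset γ) : Finset ι :=
  {i | #{s ∈ S | f s = i} < k}

theorem mem_sparseFibers [Fintype ι] {f : γ → ι} {k : ℕ} {S : Finset γ} {i : ι} :
    i ∈ sparseFibers f k S ↔ #{s ∈ S | f s = i} < k := by
  simp only [sparseFibers, mem_filter_univ]

theorem mul_card_le_mul_card_sparseFibers_add [Fintype ι] (f : γ → ι) (k : ℕ) (S : Finset γ) :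
    k * Fintype.card ι ≤ k * #(sparseFibers f k S) + #S := by
  have hdense : #(sparseFibers f k S)ᶜ * k ≤ #S := calc
    #(sparseFibers f k S)ᶜ * k ≤ ∑ i ∈ (sparseFibers f k S)ᶜ, #{s ∈ S | f s = i} :=
      card_nsmul_le_sum _ _ _ fun i hi => not_lt.1 (mt mem_sparseFibers.2 (mem_compl.1 hi))
    _ = #{s ∈ S | f s ∈ (sparseFibers f k S)ᶜ} := sum_card_fiberwise_eq_card_filter ..
    _ ≤ #S := card_filter_le ..
  rw [← card_add_card_compl (sparseFibers f k S)]
  linarith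

theorem two_mul_le_card_sparseFibers_add_one [Fintype ι] (f : γ → ι) {k l : ℕ} {S : Finset γ}
    (hS : (#S : ℤ) < k * (Fintype.card ι - 2 * l + 2)) : 2 * l ≤ #(sparseFibers f k S) + 1 := by
  have hcount : (k * Fintype.card ι : ℤ) ≤ k * #(sparseFibers f k S) + #S := by
    exact_mod_cast mul_card_le_mul_card_sparseFibers_add f k S
  have hlt : (k : ℤ) * Fintype.card ι <
      k * (#(sparseFibers f k S) + (Fintype.card ι - 2 * l + 2)) := by
    linarith
  have := lt_of_mul_lt_mul_left hlt k.cast_nonneg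
  omega

theorem two_mul_card_filter_mem_lt {f : γ → ι} {k c : ℕ} {S : Finset γ} {A : Finset ι}
    (hA : A.Nonempty) (hsparse : ∀ i ∈ A, #{s ∈ S | f s = i} < k) (hc : 2 * k ≤ c + 1) :
    2 * #{s ∈ S | f s ∈ A} < #A * c := by
  rw [← sum_card_fiberwise_eq_card_filter, mul_sum, ← smul_eq_mul (#A), ← sum_const]
  refine sum_lt_sum_of_nonempty hA fun i hi => ?_
  have := hsparse i hi
  omega

end SparseFibers

section BoxProd

open Finset

theorem IsKConnected.preconnected_induce_compl {V : Type*} [Fintype V] {G : SimpleGraph V} {k : ℕ}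
    (hG : IsKConnected k G) {S : Finset V} (hS : #S < k) :
    (G.induce (S : Set V)ᶜ).Preconnected := by
  rw [Set.compl_eq_univ_sdiff, preconnected_induce_iff]
  exact (hG.2 S hS).preconnected

theorem IsKConnected.reachable_induce_of_embedding {V W : Type*} [Fintype V] {G : SimpleGraph V}
    {K : SimpleGraph W} {k : ℕ} (hG : IsKConnected k G) (φ : G ↪g K) {F : Finset W} (hF : #F < k)
    {X : Set W} (hX : ∀ v, φ v ∉ F → φ v ∈ X) {u v : V} (hu : φ u ∉ F) (hv : φ v ∉ F) :
    (K.induce X).Reachable ⟨φ u, hX u hu⟩ ⟨φ v, hX v hv⟩ := by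
  have hmem (w : V) : w ∈ F.preimage φ φ.injective.injOn ↔ φ w ∈ F := mem_preimage
  have hcard : #(F.preimage φ φ.injective.injOn) ≤ #F :=
    card_le_card_of_injOn φ (fun w hw => (hmem w).1 hw) φ.injective.injOn
  have hconn := hG.preconnected_induce_compl (hcard.trans_lt hF)
  exact (hconn ⟨u, mt (hmem u).1 hu⟩ ⟨v, mt (hmem v).1 hv⟩).map
    (induceHom φ.toHom fun w hw => hX w (mt (hmem w).2 hw))

variable {α β : Type*} [Fintype α] [Fintype β] [DecidableEq α] [DecidableEq β]
  {G : SimpleGraph α} {H : SimpleGraph β} {k l : ℕ} {S T : Finset (α × β)}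

/-- The points off `S` that lie in a column with fewer than `l` points of `S` or in a row with fewer
than `k` points of `S`. When `G` is `k`-connected and `H` is `l`-connected, these are the lines that
`S` cannot disconnect in `G □ H`; their union is the bramble set attached to `S`. -/
def sparseLines (k l : ℕ) (S : Finset (α × β)) : Set (α × β) :=
  {p | p ∉ S ∧ (p.1 ∈ sparseFibers Prod.fst l S ∨ p.2 ∈ sparseFibers Prod.snd k S)}

theorem disjoint_sparseLines (k l : ℕ) (S : Finset (α × β)) :
    Disjoint (S : Set (α × β)) (sparseLines k l S) :=
  Set.disjoint_left.2 fun _ hp hp' => hp'.1 hp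

theorem reachable_sparseLines_of_fst_mem (G : SimpleGraph α) (hH : IsKConnected l H) {a : α}
    (ha : a ∈ sparseFibers Prod.fst l S) {b b' : β} (hb : (a, b) ∉ S) (hb' : (a, b') ∉ S) :
    ((G □ H).induce (sparseLines k l S)).Reachable
      ⟨(a, b), hb, Or.inl ha⟩ ⟨(a, b'), hb', Or.inl ha⟩ :=
  hH.reachable_induce_of_embedding (G.boxProdRight H a) (mem_sparseFibers.1 ha)
    (X := sparseLines k l S) (fun _ hc => ⟨fun hcS => hc (mem_filter.2 ⟨hcS, rfl⟩), Or.inl ha⟩)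
    (fun h => hb (mem_filter.1 h).1) (fun h => hb' (mem_filter.1 h).1)

theorem reachable_sparseLines_of_snd_mem (H : SimpleGraph β) (hG : IsKConnected k G) {b : β}
    (hb : b ∈ sparseFibers Prod.snd k S) {a a' : α} (ha : (a, b) ∉ S) (ha' : (a', b) ∉ S) :
    ((G □ H).induce (sparseLines k l S)).Reachable
      ⟨(a, b), ha, Or.inr hb⟩ ⟨(a', b), ha', Or.inr hb⟩ :=
  hG.reachable_induce_of_embedding (G.boxProdLeft H b) (mem_sparseFibers.1 hb)
    (X := sparseLines k l S) (fun _ hc => ⟨fun hcS => hc (mem_filter.2 ⟨hcS, rfl⟩), Or.inr hb⟩)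
    (fun h => ha (mem_filter.1 h).1) (fun h => ha' (mem_filter.1 h).1)

theorem exists_sparse_row_of_sparse_columns (hrows : 2 * l ≤ #(sparseFibers Prod.snd k S) + 1)
    {a a' : α} (ha : a ∈ sparseFibers Prod.fst l S) (ha' : a' ∈ sparseFibers Prod.fst l S) :
    ∃ b ∈ sparseFibers Prod.snd k S, (a, b) ∉ S ∧ (a', b) ∉ S := by
  rw [mem_sparseFibers] at ha ha'
  have hcard : #({s ∈ S | s.1 = a} ∪ {s ∈ S | s.1 = a'}) < #(sparseFibers Prod.snd k S) := by
    have := card_union_le {s ∈ S | s.1 = a} {s ∈ S | s.1 = a'}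
    omega
  obtain ⟨b, hb, hne⟩ := exists_forall_ne_of_card_lt hcard Prod.snd
  exact ⟨b, hb, fun h => hne (a, b) (by simp [h]) rfl, fun h => hne (a', b) (by simp [h]) rfl⟩

theorem exists_sparse_column_of_sparse_row (hcols : k ≤ #(sparseFibers Prod.fst l S))
    {b : β} (hb : b ∈ sparseFibers Prod.snd k S) :
    ∃ a ∈ sparseFibers Prod.fst l S, (a, b) ∉ S := by
  have hcard : #{s ∈ S | s.2 = b} < #(sparseFibers Prod.fst l S) :=
    (mem_sparseFibers.1 hb).trans_le hcols
  obtain ⟨a, ha, hne⟩ := exists_forall_ne_of_card_lt hcard Prod.fst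
  exact ⟨a, ha, fun h => hne (a, b) (by simp [h]) rfl⟩

theorem preconnected_induce_sparseLines (hG : IsKConnected k G) (hH : IsKConnected l H)
    (hcols : 2 * k ≤ #(sparseFibers Prod.fst l S) + 1)
    (hrows : 2 * l ≤ #(sparseFibers Prod.snd k S) + 1) :
    ((G □ H).induce (sparseLines k l S)).Preconnected := by
  have hcolumn (p : sparseLines k l S) : ∃ a, ∃ ha : a ∈ sparseFibers Prod.fst l S,
      ∃ b, ∃ hab : (a, b) ∉ S,
        ((G □ H).induce (sparseLines k l S)).Reachable p ⟨(a, b), hab, Or.inl ha⟩ := by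
    obtain ⟨⟨a, b⟩, hp, ha | hb⟩ := p
    · exact ⟨a, ha, b, hp, Reachable.rfl⟩
    · have hk : k ≤ #(sparseFibers Prod.fst l S) := by
        have := mem_sparseFibers.1 hb
        omega
      obtain ⟨a', ha', hab'⟩ := exists_sparse_column_of_sparse_row hk hb
      exact ⟨a', ha', b, hab', reachable_sparseLines_of_snd_mem H hG hb hp hab'⟩
  intro p q
  obtain ⟨a, ha, b, hab, hp⟩ := hcolumn p
  obtain ⟨a', ha', b', hab', hq⟩ := hcolumn q
  obtain ⟨c, hc, hac, hac'⟩ := exists_sparse_row_of_sparse_columns hrows ha ha'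
  have hcol := reachable_sparseLines_of_fst_mem (k := k) G hH ha hab hac
  have hrow := reachable_sparseLines_of_snd_mem (l := l) H hG hc hac hac'
  have hcol' := reachable_sparseLines_of_fst_mem (k := k) G hH ha' hac' hab'
  exact (hp.trans hcol).trans (hrow.trans (hcol'.trans hq.symm))

theorem sparseLines_inter_nonempty (hk : 0 < k) (hl : 0 < l)
    (hcols : 2 * k ≤ #(sparseFibers Prod.fst l S) + 1)
    (hrows : 2 * l ≤ #(sparseFibers Prod.snd k T) + 1) :
    (sparseLines k l S ∩ sparseLines k l T).Nonempty := by
  set A := sparseFibers Prod.fst l S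
  set B := sparseFibers Prod.snd k T
  have hS : 2 * #{s ∈ S | s.1 ∈ A} < #A * #B :=
    two_mul_card_filter_mem_lt (card_pos.1 (by omega)) (fun _ => mem_sparseFibers.1) hrows
  have hT : 2 * #{t ∈ T | t.2 ∈ B} < #B * #A :=
    two_mul_card_filter_mem_lt (card_pos.1 (by omega)) (fun _ => mem_sparseFibers.1) hcols
  have hcard : #({s ∈ S | s.1 ∈ A} ∪ {t ∈ T | t.2 ∈ B}) < #(A ×ˢ B) := by
    have := card_union_le {s ∈ S | s.1 ∈ A} {t ∈ T | t.2 ∈ B}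
    rw [card_product]
    rw [mul_comm #B] at hT
    omega
  obtain ⟨⟨a, b⟩, hab, hnot⟩ := exists_mem_notMem_of_card_lt_card hcard
  obtain ⟨ha, hb⟩ := mem_product.1 hab
  simp only [mem_union, mem_filter, ha, hb, and_true, not_or] at hnot
  exact ⟨(a, b), ⟨hnot.1, Or.inl ha⟩, ⟨hnot.2, Or.inr hb⟩⟩

theorem isBramble_sparseLines (hG : IsKConnected k G) (hH : IsKConnected l H)
    {𝒮 : Set (Finset (α × β))}
    (h𝒮 : ∀ S ∈ 𝒮, (#S : ℤ) <
      min ((l : ℤ) * (Fintype.card α - 2 * k + 2)) (k * (Fintype.card β - 2 * l + 2))) :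
    IsBramble_s0 (G □ H) (sparseLines k l '' 𝒮) := by
  have hcols : ∀ S ∈ 𝒮, 2 * k ≤ #(sparseFibers Prod.fst l S) + 1 := fun S hS =>
    two_mul_le_card_sparseFibers_add_one _ ((h𝒮 S hS).trans_le (min_le_left _ _))
  have hrows : ∀ S ∈ 𝒮, 2 * l ≤ #(sparseFibers Prod.snd k S) + 1 := fun S hS =>
    two_mul_le_card_sparseFibers_add_one _ ((h𝒮 S hS).trans_le (min_le_right _ _))
  have hinter : ∀ S ∈ 𝒮, ∀ T ∈ 𝒮, (sparseLines k l S ∩ sparseLines k l T).Nonempty := by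
    intro S hS T hT
    obtain ⟨hposl, hposk⟩ := lt_min_iff.1 ((Int.natCast_nonneg #S).trans_lt (h𝒮 S hS))
    have hk : 0 < k := Nat.pos_of_ne_zero fun hk => by simp [hk] at hposk
    have hl : 0 < l := Nat.pos_of_ne_zero fun hl => by simp [hl] at hposl
    exact sparseLines_inter_nonempty hk hl (hcols S hS) (hrows T hT)
  refine ⟨Set.forall_mem_image.2 fun S hS => ?_,
    Set.forall_mem_image.2 fun S hS => Set.forall_mem_image.2 fun T hT => ?_⟩
  · have : Nonempty (sparseLines k l S) :=
      ((hinter S hS S hS).mono Set.inter_subset_left).to_subtype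
    exact ⟨preconnected_induce_sparseLines hG hH (hcols S hS) (hrows S hS)⟩
  · obtain ⟨p, hpS, hpT⟩ := hinter S hS T hT
    exact ⟨p, hpS, p, hpT, Or.inl rfl⟩

end BoxProd

theorem treewidth_boxProd_ge_general {α β : Type*} [Fintype α] [Fintype β] {k l : ℕ}
    {G : SimpleGraph α} {H : SimpleGraph β} (hG : IsKConnected k G) (hH : IsKConnected l H) :
    min ((l : ℤ) * (Fintype.card α - 2 * k + 2)) (k * (Fintype.card β - 2 * l + 2)) - 1 ≤
      treewidth (G □ H) := by
  classical
  set r := min ((l : ℤ) * (Fintype.card α - 2 * k + 2)) (k * (Fintype.card β - 2 * l + 2))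
  have hbramble := isBramble_sparseLines hG hH (𝒮 := {S | (S.card : ℤ) < r}) fun S hS => hS
  have hr : r.toNat ≤ treewidth (G □ H) + 1 := hbramble.le_treewidth_add_one fun S hS =>
    ⟨_, Set.mem_image_of_mem _ (Int.lt_toNat.1 hS), disjoint_sparseLines k l S⟩
  omega

/-- **Treewidth of cartesian products of highly connected graphs.**
For all `k`-connected graphs `G` and `H` each with at least `n` vertices, the
treewidth of the cartesian product `G □ H` is at least `k * (n - 2 * k + 2) - 1`. -/
theorem treewidth_boxProd_ge {α β : Type} [Fintype α] [Fintype β] (k n : ℕ)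
    (G : SimpleGraph α) (H : SimpleGraph β)
    (hG : IsKConnected k G) (hH : IsKConnected k H)
    (hGn : n ≤ Fintype.card α) (hHn : n ≤ Fintype.card β) :
    (k : ℤ) * ((n : ℤ) - 2 * (k : ℤ) + 2) - 1 ≤ (treewidth (G □ H) : ℤ) := by
  refine le_trans ?_ (treewidth_boxProd_ge_general hG hH)
  gcongr
  exact le_min (by gcongr) (by gcongr)
end

section
/- Let G and H be k-connected graphs each with at least n ≥ 2k − 1 vertices. Then the cartesian product G □ H contains a bramble of order at least k(n − 2k + 2). -/
open SimpleGraph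

/-- Two subgraphs touch if they share a vertex or there is an edge between them. -/
def Touch {V : Type*} {G : SimpleGraph V} (X Y : G.Subgraph) : Prop :=
  (X.verts ∩ Y.verts).Nonempty ∨ ∃ v ∈ X.verts, ∃ w ∈ Y.verts, G.Adj v w

/-- A bramble: a set of pairwise touching connected subgraphs. -/
def IsBramble {V : Type*} {G : SimpleGraph V} (B : Set G.Subgraph) : Prop :=
  (∀ X ∈ B, X.Connected) ∧ ∀ X ∈ B, ∀ Y ∈ B, Touch X Y

/-- A hitting set of a bramble: a set of vertices meeting every element. -/
def IsHittingSet {V : Type*} {G : SimpleGraph V} (B : Set G.Subgraph) (S : Set V) : Prop :=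
  ∀ X ∈ B, (S ∩ X.verts).Nonempty

/-- The order of a bramble: the minimum size of a hitting set. -/
noncomputable def brambleOrder {V : Type*} {G : SimpleGraph V} (B : Set G.Subgraph) : ℕ :=
  sInf {m : ℕ | ∃ S : Finset V, IsHittingSet B ↑S ∧ S.card = m}

/-!
Fix a small set `S` of vertices of `G □ H`, and call a row or a column light if it meets `S` in
fewer than `k` vertices. By `k`-connectivity, a light row or column stays connected after
deleting `S`. If `S` has fewer than `k * (n - 2 * k + 2)` vertices, then at least `2 * k - 1` rows
and `2 * k - 1` columns are light, so any two light columns are linked by a light row avoiding `S`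
on both; hence the union of the light lines, minus `S`, is connected. These unions form
the bramble: two of them meet, because in the grid formed by the light rows of `S` and the light
columns of `T` each row loses fewer than half of its points to `S` and each column fewer than half
to `T`. By construction `S` does not hit its own union.
-/

open Finset

section Counting

variable {α β : Type*}

lemma exists_not_and_not_of_card_mul_add_card_mul_lt {A : Finset α} {X : Finset β} {m l : ℕ}
    (r s : α → β → Prop) [∀ a b, Decidable (r a b)] [∀ a b, Decidable (s a b)]
    (hr : ∀ a ∈ A, #{b ∈ X | r a b} ≤ m) (hs : ∀ b ∈ X, #{a ∈ A | s a b} ≤ l)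
    (h : #A * m + #X * l < #A * #X) :
    ∃ a ∈ A, ∃ b ∈ X, ¬ r a b ∧ ¬ s a b := by
  classical
  by_contra! hcover
  have hrow : ∀ a ∈ A, #X ≤ #{b ∈ X | r a b} + #{b ∈ X | s a b} := by
    intro a ha
    have hX : X ⊆ {b ∈ X | r a b} ∪ {b ∈ X | s a b} := fun b hb => by
      simpa [hb, ← filter_or, or_iff_not_imp_left] using hcover a ha b hb
    exact (card_le_card hX).trans (card_union_le _ _)
  refine h.not_ge ?_
  calc #A * #X
      ≤ ∑ a ∈ A, (#{b ∈ X | r a b} + #{b ∈ X | s a b}) := by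
        simpa using card_nsmul_le_sum _ _ _ hrow
    _ = ∑ a ∈ A, #{b ∈ X | r a b} + ∑ b ∈ X, #{a ∈ A | s a b} := by
        rw [sum_add_distrib]
        exact congrArg _ (sum_card_bipartiteAbove_eq_sum_card_bipartiteBelow s)
    _ ≤ #A * m + #X * l := by
        simpa using add_le_add (sum_le_card_nsmul _ _ _ hr) (sum_le_card_nsmul _ _ _ hs)

lemma exists_mem_notMem_notMem_of_card_add_card_lt {A P Q : Finset α} (h : #P + #Q < #A) :
    ∃ a ∈ A, a ∉ P ∧ a ∉ Q := by
  classical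
  obtain ⟨a, ha, haPQ⟩ := exists_mem_notMem_of_card_lt_card ((card_union_le P Q).trans_lt h)
  exact ⟨a, ha, by simpa using haPQ⟩

end Counting

section LightLines

variable {α β : Type*} [Fintype α] [Fintype β] [DecidableEq α] [DecidableEq β]

/-- The first coordinates `a` whose row `{a} × β` meets `S` in fewer than `k` points. -/
def lightRows (S : Finset (α × β)) (k : ℕ) : Finset α :=
  {a | #{b | (a, b) ∈ S} < k}

/-- The second coordinates `b` whose column `α × {b}` meets `S` in fewer than `k` points, encoded
as the light rows of the transpose of `S`. -/
def lightCols (S : Finset (α × β)) (k : ℕ) : Finset β :=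
  lightRows (S.map (Equiv.prodComm α β).toEmbedding) k

/-- At least `2 * k - 1` rows and `2 * k - 1` columns are light. The truncated difference is
harmless, since no row is light when `k = 0`. -/
def HasManyLightLines (S : Finset (α × β)) (k : ℕ) : Prop :=
  2 * (k - 1) < #(lightRows S k) ∧ 2 * (k - 1) < #(lightCols S k)

/-- The points outside `S` that lie in a light row or in a light column; in the box product, these
are the vertex sets of the bramble. -/
def lightCross (S : Finset (α × β)) (k : ℕ) : Set (α × β) :=
  {p | p ∉ S ∧ (p.1 ∈ lightRows S k ∨ p.2 ∈ lightCols S k)}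

variable {S T : Finset (α × β)} {k n : ℕ} {a : α} {b : β}

lemma mem_lightRows : a ∈ lightRows S k ↔ #{b | (a, b) ∈ S} < k := by
  simp [lightRows]

lemma mem_lightCols : b ∈ lightCols S k ↔ #{a | (a, b) ∈ S} < k := by
  simp [lightCols, mem_lightRows]

lemma card_compl_lightRows_mul_le_card (S : Finset (α × β)) (k : ℕ) :
    #(lightRows S k)ᶜ * k ≤ #S := by
  rw [← mul_one #S]
  refine card_mul_le_card_mul (fun a p => p.1 = a) (fun a ha => ?_) fun p _ => ?_
  · have hrow : k ≤ #{b | (a, b) ∈ S} := by simpa [mem_lightRows] using ha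
    refine hrow.trans (card_le_card_of_injOn (Prod.mk a) ?_ (Prod.mk_right_injective a).injOn)
    simp [Set.MapsTo, bipartiteAbove]
  · exact card_le_one_iff.2 fun ha ha' =>
      ((mem_bipartiteBelow _).1 ha).2.symm.trans ((mem_bipartiteBelow _).1 ha').2

lemma lt_card_lightRows (hn : n ≤ Fintype.card α) (hS : #S < k * (n + 2 - 2 * k)) :
    2 * (k - 1) < #(lightRows S k) := by
  have hheavy : #(lightRows S k)ᶜ < n + 2 - 2 * k :=
    lt_of_mul_lt_mul_left' ((mul_comm _ _).trans_lt
      ((card_compl_lightRows_mul_le_card S k).trans_lt hS))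
  have hk : 0 < k := pos_of_mul_pos_left hS.pos (Nat.zero_le _)
  have hadd := card_add_card_compl (lightRows S k)
  omega

lemma lt_card_lightCols (hn : n ≤ Fintype.card β) (hS : #S < k * (n + 2 - 2 * k)) :
    2 * (k - 1) < #(lightCols S k) :=
  lt_card_lightRows hn (by rwa [card_map])

lemma lightCross_inter_nonempty (hS : HasManyLightLines S k) (hT : HasManyLightLines T k) :
    (lightCross S k ∩ lightCross T k).Nonempty := by
  obtain ⟨a, ha, b, hb, habS, habT⟩ : ∃ a ∈ lightRows S k, ∃ b ∈ lightCols T k,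
      (a, b) ∉ S ∧ (a, b) ∉ T := by
    apply exists_not_and_not_of_card_mul_add_card_mul_lt (m := k - 1) (l := k - 1)
      (fun a b => (a, b) ∈ S) (fun a b => (a, b) ∈ T)
    · exact fun a ha => (card_le_card (filter_subset_filter _ (subset_univ _))).trans
        (Nat.le_pred_of_lt (mem_lightRows.1 ha))
    · exact fun b hb => (card_le_card (filter_subset_filter _ (subset_univ _))).trans
        (Nat.le_pred_of_lt (mem_lightCols.1 hb))
    · nlinarith [hS.1, hT.2]
  exact ⟨(a, b), ⟨habS, .inl ha⟩, habT, .inr hb⟩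

end LightLines

lemma IsKConnected.connected_induce_compl {V : Type*} [Fintype V] {G : SimpleGraph V} {k : ℕ}
    (hG : IsKConnected k G) {F : Finset V} (hF : #F < k) :
    (G.induce (F : Set V)ᶜ).Connected := by
  simpa [connected_induce_iff, Subgraph.deleteVerts, Set.compl_eq_univ_sdiff] using hG.2 F hF

lemma IsKConnected.reachable_induce {V W : Type*} [Fintype V] {G : SimpleGraph V}
    {K : SimpleGraph W} {k : ℕ} (hG : IsKConnected k G) (f : G →g K) {s : Set W} {F : Finset V}
    (hF : #F < k) (hs : Set.MapsTo f (F : Set V)ᶜ s) {v w : V} (hv : v ∉ F) (hw : w ∉ F) :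
    (K.induce s).Reachable ⟨f v, hs hv⟩ ⟨f w, hs hw⟩ :=
  ((hG.connected_induce_compl hF).preconnected ⟨v, hv⟩ ⟨w, hw⟩).map (induceHom f hs)

lemma IsBramble.le_brambleOrder {V : Type*} [Finite V] {G : SimpleGraph V} {B : Set G.Subgraph}
    (hB : IsBramble B) {m : ℕ}
    (h : ∀ S : Finset V, #S < m → ∃ X ∈ B, Disjoint (S : Set V) X.verts) :
    m ≤ brambleOrder B := by
  cases nonempty_fintype V
  have huniv : IsHittingSet B ↑(univ : Finset V) := fun X hX => by
    simpa using (hB.1 X hX).nonempty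
  refine le_csInf ⟨_, univ, huniv, rfl⟩ ?_
  rintro _ ⟨S, hS, rfl⟩
  by_contra! hlt
  obtain ⟨X, hX, hdisj⟩ := h S hlt
  exact (hS X hX).ne_empty hdisj.inter_eq

section BoxProd

variable {α β : Type*} [Fintype α] [Fintype β] [DecidableEq α] [DecidableEq β]
  {G : SimpleGraph α} {H : SimpleGraph β} {S : Finset (α × β)} {k : ℕ}

lemma IsKConnected.reachable_lightCross_of_mem_lightRows (G : SimpleGraph α)
    (hH : IsKConnected k H) {a : α} {b b' : β} (ha : a ∈ lightRows S k)
    (hb : (a, b) ∈ lightCross S k) (hb' : (a, b') ∈ lightCross S k) :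
    ((G □ H).induce (lightCross S k)).Reachable ⟨(a, b), hb⟩ ⟨(a, b'), hb'⟩ :=
  hH.reachable_induce (G.boxProdRight H a).toHom (s := lightCross S k)
    (F := {b | (a, b) ∈ S}) (mem_lightRows.1 ha)
    (fun _ h => ⟨by simpa using h, .inl ha⟩) (by simpa using hb.1) (by simpa using hb'.1)

lemma IsKConnected.reachable_lightCross_of_mem_lightCols (H : SimpleGraph β)
    (hG : IsKConnected k G) {a a' : α} {b : β} (hb : b ∈ lightCols S k)
    (ha : (a, b) ∈ lightCross S k) (ha' : (a', b) ∈ lightCross S k) :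
    ((G □ H).induce (lightCross S k)).Reachable ⟨(a, b), ha⟩ ⟨(a', b), ha'⟩ :=
  hG.reachable_induce (G.boxProdLeft H b).toHom (s := lightCross S k)
    (F := {a | (a, b) ∈ S}) (mem_lightCols.1 hb)
    (fun _ h => ⟨by simpa using h, .inr hb⟩) (by simpa using ha.1) (by simpa using ha'.1)

lemma IsKConnected.exists_reachable_snd_mem_lightCols (G : SimpleGraph α) (hH : IsKConnected k H)
    (hcols : k ≤ #(lightCols S k)) (p : lightCross S k) :
    ∃ q : lightCross S k, q.1.2 ∈ lightCols S k ∧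
      ((G □ H).induce (lightCross S k)).Reachable p q := by
  obtain ⟨⟨a, b⟩, habS, ha | hb⟩ := p
  · obtain ⟨y, hy, hayS⟩ :=
      exists_mem_notMem_of_card_lt_card ((mem_lightRows.1 ha).trans_le hcols)
    have hay : (a, y) ∈ lightCross S k := ⟨by simpa using hayS, .inr hy⟩
    exact ⟨⟨(a, y), hay⟩, hy, hH.reachable_lightCross_of_mem_lightRows G ha _ _⟩
  · exact ⟨_, hb, .rfl⟩

lemma reachable_lightCross_of_snd_mem_lightCols (hG : IsKConnected k G) (hH : IsKConnected k H)
    (hrows : 2 * (k - 1) < #(lightRows S k)) {p q : lightCross S k}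
    (hp : p.1.2 ∈ lightCols S k) (hq : q.1.2 ∈ lightCols S k) :
    ((G □ H).induce (lightCross S k)).Reachable p q := by
  obtain ⟨⟨a, x⟩, hax⟩ := p
  obtain ⟨⟨b, y⟩, hby⟩ := q
  have hx : #{a | (a, x) ∈ S} < k := mem_lightCols.1 hp
  have hy : #{a | (a, y) ∈ S} < k := mem_lightCols.1 hq
  obtain ⟨c, hc, hcxS, hcyS⟩ := exists_mem_notMem_notMem_of_card_add_card_lt
    (show #{a | (a, x) ∈ S} + #{a | (a, y) ∈ S} < #(lightRows S k) by omega)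
  have hcx : (c, x) ∈ lightCross S k := ⟨by simpa using hcxS, .inl hc⟩
  have hcy : (c, y) ∈ lightCross S k := ⟨by simpa using hcyS, .inl hc⟩
  exact (hG.reachable_lightCross_of_mem_lightCols H hp hax hcx).trans <|
    (hH.reachable_lightCross_of_mem_lightRows G hc hcx hcy).trans <|
      hG.reachable_lightCross_of_mem_lightCols H hq hcy hby

lemma connected_induce_lightCross (hG : IsKConnected k G) (hH : IsKConnected k H)
    (hS : HasManyLightLines S k) : ((G □ H).induce (lightCross S k)).Connected where
  preconnected p q := by
    have hcols : k ≤ #(lightCols S k) := by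
      have := hS.2
      omega
    obtain ⟨p', hp', hpp'⟩ := hH.exists_reachable_snd_mem_lightCols G hcols p
    obtain ⟨q', hq', hqq'⟩ := hH.exists_reachable_snd_mem_lightCols G hcols q
    have hp'q' := reachable_lightCross_of_snd_mem_lightCols hG hH hS.1 hp' hq'
    exact (hpp'.trans hp'q').trans hqq'.symm
  nonempty := (lightCross_inter_nonempty hS hS).left.to_subtype

/-- The subgraphs of `G □ H` induced by the light crosses of the sets with many light lines; a
bramble of large order when `G` and `H` are `k`-connected. -/
def lightCrossBramble (G : SimpleGraph α) (H : SimpleGraph β) (k : ℕ) : Set (G □ H).Subgraph :=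
  {X | ∃ S : Finset (α × β), HasManyLightLines S k ∧
    (⊤ : (G □ H).Subgraph).induce (lightCross S k) = X}

lemma isBramble_lightCrossBramble (hG : IsKConnected k G) (hH : IsKConnected k H) :
    IsBramble (lightCrossBramble G H k) := by
  constructor
  · rintro _ ⟨S, hS, rfl⟩
    exact connected_induce_iff.1 (connected_induce_lightCross hG hH hS)
  · rintro _ ⟨S, hS, rfl⟩ _ ⟨T, hT, rfl⟩
    exact .inl (lightCross_inter_nonempty hS hT)

end BoxProd

/-- Let `G` and `H` be `k`-connected graphs each with at least `n ≥ 2k - 1` vertices.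
Then `G □ H` contains a bramble of order at least `k * (n - 2 * k + 2)`. -/
theorem exists_bramble_boxProd {α β : Type} [Fintype α] [Fintype β] (k n : ℕ)
    (G : SimpleGraph α) (H : SimpleGraph β)
    (hG : IsKConnected k G) (hH : IsKConnected k H)
    (hn : 2 * k ≤ n + 1)
    (hGn : n ≤ Fintype.card α) (hHn : n ≤ Fintype.card β) :
    ∃ B : Set (G □ H).Subgraph, IsBramble B ∧ k * (n + 2 - 2 * k) ≤ brambleOrder B := by
  classical
  have hB := isBramble_lightCrossBramble hG hH
  refine ⟨lightCrossBramble G H k, hB, hB.le_brambleOrder fun S hS => ?_⟩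
  have hmany : HasManyLightLines S k := ⟨lt_card_lightRows hGn hS, lt_card_lightCols hHn hS⟩
  exact ⟨_, ⟨S, hmany, rfl⟩, Set.disjoint_left.2 fun _ hpS hp => hp.1 hpS⟩
end

section
/- Let G and H be k-connected graphs. For each vertex v of G let H_v denote the v-copy of H in G □ H, and for each vertex w of H let G_w denote the w-copy of G. Let S be a set of 2k − 1 vertices of G and T a set of 2k − 1 vertices of H. Let X be a subgraph of G □ H obtained from the union of ∪{H_v : v ∈ S} and ∪{G_w : w ∈ T} by deleting vertices so that at most k − 1 vertices are deleted from H_v for each v ∈ S, and at most k − 1 vertices are deleted from G_w for each w ∈ T. Then X is connected. -/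
open SimpleGraph

/-- The `v`-copy of `H` in `G □ H`: the subgraph induced on `{(v, w) : w ∈ V(H)}`. -/
def copyH {α : Type*} {β : Type*} (G : SimpleGraph α) (H : SimpleGraph β) (v : α) :
    (G □ H).Subgraph :=
  (⊤ : (G □ H).Subgraph).induce {p : α × β | p.1 = v}

/-- The `w`-copy of `G` in `G □ H`: the subgraph induced on `{(v, w) : v ∈ V(G)}`. -/
def copyG {α : Type*} {β : Type*} (G : SimpleGraph α) (H : SimpleGraph β) (w : β) :
    (G □ H).Subgraph :=
  (⊤ : (G □ H).Subgraph).induce {p : α × β | p.2 = w}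

/-- The subgraph of `G □ H` obtained from the union of the copies `H_v` (`v ∈ S`)
and `G_w` (`w ∈ T`) by deleting the vertices in `D`. -/
def brambleElt {α : Type*} {β : Type*} (G : SimpleGraph α) (H : SimpleGraph β)
    (S : Set α) (T : Set β) (D : Set (α × β)) : (G □ H).Subgraph :=
  ((⨆ v ∈ S, copyH G H v) ⊔ ⨆ w ∈ T, copyG G H w).deleteVerts D

/-!
The surviving part of each chosen copy is connected, since too few vertices are deleted to separate
it. Two surviving parts of copies `H_v` and `H_v'` both meet the surviving part of some `G_t` with
`t ∈ T`: at most `2 (k - 1)` of the `2k - 1` elements `t` have `(v, t)` or `(v', t)` deleted. A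
surviving part of a copy `G_w` meets that of some `H_v` with `v ∈ S`, since fewer than `|S|`
vertices of `G_w` are deleted.
-/

section Subgraph

variable {V W : Type*} {G : SimpleGraph V} {G' : SimpleGraph W}

lemma subgraph_map_connected (f : G →g G') {X : G.Subgraph} (hX : X.Connected) :
    (X.map f).Connected := by
  rw [Subgraph.connected_iff_forall_exists_walk_subgraph] at hX ⊢
  refine ⟨hX.1.image f, ?_⟩
  rintro _ _ ⟨x, hx, rfl⟩ ⟨y, hy, rfl⟩
  obtain ⟨p, hp⟩ := hX.2 hx hy
  exact ⟨p.map f, by simpa only [Walk.toSubgraph_map] using Subgraph.map_mono hp⟩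

lemma subgraph_connected_of_forall_exists_connected_le {X : G.Subgraph} (hne : X.verts.Nonempty)
    (h : ∀ x ∈ X.verts, ∀ y ∈ X.verts,
      ∃ Y : G.Subgraph, Y ≤ X ∧ Y.Connected ∧ x ∈ Y.verts ∧ y ∈ Y.verts) :
    X.Connected := by
  refine X.connected_iff_forall_exists_walk_subgraph.2 ⟨hne, fun {x y} hx hy => ?_⟩
  obtain ⟨Y, hYX, hY, hxY, hyY⟩ := h x hx y hy
  obtain ⟨p, hp⟩ := (Y.connected_iff_forall_exists_walk_subgraph.1 hY).2 hxY hyY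
  exact ⟨p, hp.trans hYX⟩

end Subgraph

section Deletion

variable {V : Type*} {G : SimpleGraph V}

/-- `G` remains connected after the deletion of any at most `d` vertices. On finite graphs with
more than `d + 1` vertices this is `(d + 1)`-connectedness; it also makes sense for infinite graphs.
-/
def ConnectedAfterDeleting (d : ℕ∞) (G : SimpleGraph V) : Prop :=
  ∀ B : Set V, B.encard ≤ d → ((⊤ : G.Subgraph).deleteVerts B).Connected

lemma IsKConnected.connectedAfterDeleting [Fintype V] {k : ℕ} (hG : IsKConnected (k + 1) G) :
    ConnectedAfterDeleting k G := by
  intro B hB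
  lift B to Finset V using B.toFinite
  rw [Set.encard_coe_eq_coe_finsetCard, Nat.cast_le] at hB
  exact hG.2 B (Nat.lt_succ_of_le hB)

end Deletion

section Counting

variable {α β : Type*}

lemma exists_mem_notMem_of_encard_lt_encard {A T : Set β} (h : A.encard < T.encard) :
    ∃ t ∈ T, t ∉ A :=
  Set.not_subset.1 fun hTA => (Set.encard_le_encard hTA).not_gt h

lemma exists_mem_notMem_notMem {T A B : Set β} (h : A.encard + B.encard < T.encard) :
    ∃ t ∈ T, t ∉ A ∧ t ∉ B := by
  obtain ⟨t, ht, htAB⟩ :=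
    exists_mem_notMem_of_encard_lt_encard ((Set.encard_union_le A B).trans_lt h)
  exact ⟨t, ht, not_or.1 htAB⟩

lemma encard_preimage_prodMk_right (D : Set (α × β)) (v : α) :
    (Prod.mk v ⁻¹' D).encard = (D ∩ {p | p.1 = v}).encard := by
  have hrange : Set.range (Prod.mk v) = {p : α × β | p.1 = v} := by aesop
  rw [← (Prod.mk_right_injective v).encard_image, Set.image_preimage_eq_inter_range, hrange]

lemma encard_preimage_prodMk_left (D : Set (α × β)) (w : β) :
    ((·, w) ⁻¹' D).encard = (D ∩ {p | p.2 = w}).encard := by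
  have hrange : Set.range (fun v : α => (v, w)) = {p : α × β | p.2 = w} := by aesop
  rw [← (Prod.mk_left_injective w).encard_image, Set.image_preimage_eq_inter_range, hrange]

end Counting

section Copies

variable {α β : Type*} {G : SimpleGraph α} {H : SimpleGraph β} {D : Set (α × β)} {v : α} {w : β}

lemma copyH_deleteVerts_eq_map :
    (copyH G H v).deleteVerts D =
      ((⊤ : H.Subgraph).deleteVerts (Prod.mk v ⁻¹' D)).map (boxProdRight G H v).toHom := by
  ext p q
  · simp only [copyH, Subgraph.deleteVerts_verts, Subgraph.map_verts]
    aesop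
  · simp only [copyH, Subgraph.deleteVerts_adj, Subgraph.map_adj, Relation.map_apply]
    aesop

lemma copyG_deleteVerts_eq_map :
    (copyG G H w).deleteVerts D =
      ((⊤ : G.Subgraph).deleteVerts ((·, w) ⁻¹' D)).map (boxProdLeft G H w).toHom := by
  ext p q
  · simp only [copyG, Subgraph.deleteVerts_verts, Subgraph.map_verts]
    aesop
  · simp only [copyG, Subgraph.deleteVerts_adj, Subgraph.map_adj, Relation.map_apply]
    aesop

lemma copyH_deleteVerts_connected {d : ℕ∞} (hH : ConnectedAfterDeleting d H)
    (hD : (D ∩ {p | p.1 = v}).encard ≤ d) : ((copyH G H v).deleteVerts D).Connected := by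
  rw [copyH_deleteVerts_eq_map]
  exact subgraph_map_connected _ (hH _ ((encard_preimage_prodMk_right D v).trans_le hD))

lemma copyG_deleteVerts_connected {d : ℕ∞} (hG : ConnectedAfterDeleting d G)
    (hD : (D ∩ {p | p.2 = w}).encard ≤ d) : ((copyG G H w).deleteVerts D).Connected := by
  rw [copyG_deleteVerts_eq_map]
  exact subgraph_map_connected _ (hG _ ((encard_preimage_prodMk_left D w).trans_le hD))

lemma mk_mem_verts_copyH_deleteVerts (h : (v, w) ∉ D) :
    (v, w) ∈ ((copyH G H v).deleteVerts D).verts :=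
  ⟨rfl, h⟩

lemma mk_mem_verts_copyG_deleteVerts (h : (v, w) ∉ D) :
    (v, w) ∈ ((copyG G H w).deleteVerts D).verts :=
  ⟨rfl, h⟩

end Copies

section Bramble

variable {α β : Type*} {G : SimpleGraph α} {H : SimpleGraph β} {S : Set α} {T : Set β}
  {D : Set (α × β)} {v : α} {w : β}

lemma copyH_deleteVerts_le_brambleElt (hv : v ∈ S) :
    (copyH G H v).deleteVerts D ≤ brambleElt G H S T D :=
  Subgraph.deleteVerts_mono (le_sup_of_le_left (le_iSup₂_of_le v hv le_rfl))

lemma copyG_deleteVerts_le_brambleElt (hw : w ∈ T) :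
    (copyG G H w).deleteVerts D ≤ brambleElt G H S T D :=
  Subgraph.deleteVerts_mono (le_sup_of_le_right (le_iSup₂_of_le w hw le_rfl))

lemma mem_verts_brambleElt {p : α × β} :
    p ∈ (brambleElt G H S T D).verts ↔ (p.1 ∈ S ∨ p.2 ∈ T) ∧ p ∉ D := by
  simp [brambleElt, copyH, copyG, Subgraph.verts_iSup]

lemma exists_connected_le_brambleElt_copyH_le
    (hHv : ∀ v ∈ S, ((copyH G H v).deleteVerts D).Connected)
    (hGw : ∀ w ∈ T, ((copyG G H w).deleteVerts D).Connected)
    (hS : ∀ w ∈ T, ∃ v ∈ S, (v, w) ∉ D) {p : α × β} (hp : p ∈ (brambleElt G H S T D).verts) :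
    ∃ Y ≤ brambleElt G H S T D, Y.Connected ∧ p ∈ Y.verts ∧
      ∃ v ∈ S, (copyH G H v).deleteVerts D ≤ Y := by
  obtain ⟨x, y⟩ := p
  obtain ⟨hx | hy, hD⟩ := mem_verts_brambleElt.1 hp
  · exact ⟨(copyH G H x).deleteVerts D, copyH_deleteVerts_le_brambleElt hx, hHv x hx,
      mk_mem_verts_copyH_deleteVerts hD, x, hx, le_rfl⟩
  · obtain ⟨v, hv, hvD⟩ := hS y hy
    have hconn : ((copyG G H y).deleteVerts D ⊔ (copyH G H v).deleteVerts D).Connected :=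
      Subgraph.connected_sup (hGw y hy).preconnected (hHv v hv).preconnected
        ⟨(v, y), mk_mem_verts_copyG_deleteVerts hvD, mk_mem_verts_copyH_deleteVerts hvD⟩
    exact ⟨_, sup_le (copyG_deleteVerts_le_brambleElt hy) (copyH_deleteVerts_le_brambleElt hv),
      hconn, Or.inl (mk_mem_verts_copyG_deleteVerts hD), v, hv, le_sup_right⟩

theorem brambleElt_connected_of_copies_connected (hne : S.Nonempty)
    (hHv : ∀ v ∈ S, ((copyH G H v).deleteVerts D).Connected)
    (hGw : ∀ w ∈ T, ((copyG G H w).deleteVerts D).Connected)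
    (hS : ∀ w ∈ T, ∃ v ∈ S, (v, w) ∉ D)
    (hT : ∀ v ∈ S, ∀ v' ∈ S, ∃ t ∈ T, (v, t) ∉ D ∧ (v', t) ∉ D) :
    (brambleElt G H S T D).Connected := by
  obtain ⟨v₀, hv₀⟩ := hne
  have hX : (brambleElt G H S T D).verts.Nonempty :=
    (hHv v₀ hv₀).nonempty.mono (copyH_deleteVerts_le_brambleElt hv₀).1
  refine subgraph_connected_of_forall_exists_connected_le hX fun p hp q hq => ?_
  obtain ⟨Y, hYX, hY, hpY, v, hv, hvY⟩ := exists_connected_le_brambleElt_copyH_le hHv hGw hS hp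
  obtain ⟨Z, hZX, hZ, hqZ, v', hv', hvZ⟩ := exists_connected_le_brambleElt_copyH_le hHv hGw hS hq
  obtain ⟨t, ht, hvt, hvt'⟩ := hT v hv v' hv'
  have hYt : (Y ⊔ (copyG G H t).deleteVerts D).Connected :=
    Subgraph.connected_sup hY.preconnected (hGw t ht).preconnected
      ⟨(v, t), hvY.1 (mk_mem_verts_copyH_deleteVerts hvt), mk_mem_verts_copyG_deleteVerts hvt⟩
  have hYtZ : (Y ⊔ (copyG G H t).deleteVerts D ⊔ Z).Connected :=
    Subgraph.connected_sup hYt.preconnected hZ.preconnected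
      ⟨(v', t), Or.inr (mk_mem_verts_copyG_deleteVerts hvt'),
        hvZ.1 (mk_mem_verts_copyH_deleteVerts hvt')⟩
  exact ⟨_, sup_le (sup_le hYX (copyG_deleteVerts_le_brambleElt ht)) hZX, hYtZ,
    Or.inl (Or.inl hpY), Or.inr hqZ⟩

theorem brambleElt_connected_general {a b : ℕ∞}
    (hG : ConnectedAfterDeleting b G) (hH : ConnectedAfterDeleting a H)
    (hS : b < S.encard) (hT : a + a < T.encard)
    (hDS : ∀ v ∈ S, (D ∩ {p : α × β | p.1 = v}).encard ≤ a)
    (hDT : ∀ w ∈ T, (D ∩ {p : α × β | p.2 = w}).encard ≤ b) :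
    (brambleElt G H S T D).Connected := by
  refine brambleElt_connected_of_copies_connected (Set.encard_pos.1 hS.pos)
    (fun v hv => copyH_deleteVerts_connected hH (hDS v hv))
    (fun w hw => copyG_deleteVerts_connected hG (hDT w hw))
    (fun w hw => ?_) (fun v hv v' hv' => ?_)
  · have hDw := (encard_preimage_prodMk_left D w).trans_le (hDT w hw)
    exact exists_mem_notMem_of_encard_lt_encard (hDw.trans_lt hS)
  · have hDv := (encard_preimage_prodMk_right D v).trans_le (hDS v hv)
    have hDv' := (encard_preimage_prodMk_right D v').trans_le (hDS v' hv')
    exact exists_mem_notMem_notMem ((add_le_add hDv hDv').trans_lt hT)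

end Bramble

/-- Let `G` and `H` be `k`-connected graphs, `S` a set of `2k - 1` vertices of `G`
and `T` a set of `2k - 1` vertices of `H`. Let `X` be obtained from the union of
the copies `H_v` (`v ∈ S`) and `G_w` (`w ∈ T`) by deleting vertices such that at
most `k - 1` vertices are deleted from each `H_v` and at most `k - 1` vertices are
deleted from each `G_w`. Then `X` is connected. -/
theorem brambleElt_connected {α β : Type} [Fintype α] [Fintype β] (k : ℕ)
    (G : SimpleGraph α) (H : SimpleGraph β)
    (hG : IsKConnected k G) (hH : IsKConnected k H)
    (S : Finset α) (T : Finset β)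
    (hS : S.card + 1 = 2 * k) (hT : T.card + 1 = 2 * k)
    (D : Set (α × β))
    (hDS : ∀ v ∈ S, (D ∩ {p : α × β | p.1 = v}).ncard ≤ k - 1)
    (hDT : ∀ w ∈ T, (D ∩ {p : α × β | p.2 = w}).ncard ≤ k - 1) :
    (brambleElt G H ↑S ↑T D).Connected := by
  obtain ⟨n, rfl⟩ : ∃ n, k = n + 1 := ⟨k - 1, by omega⟩
  refine brambleElt_connected_general hG.connectedAfterDeleting hH.connectedAfterDeleting ?_ ?_
    (fun v hv => Set.encard_le_coe_iff_finite_ncard_le.2 ⟨Set.toFinite _, hDS v hv⟩)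
    (fun w hw => Set.encard_le_coe_iff_finite_ncard_le.2 ⟨Set.toFinite _, hDT w hw⟩) <;>
  · rw [Set.encard_coe_eq_coe_finsetCard]
    norm_cast
    omega
end

section
/- Let G and H be k-connected graphs each with at least n ≥ 2k − 1 vertices, and let B be the bramble in G □ H consisting of all subgraphs X obtained as follows: choose a set S of 2k − 1 vertices of G and a set T of 2k − 1 vertices of H, take the union of the copies H_v for v ∈ S and G_w for w ∈ T, and delete vertices so that at most k − 1 vertices are deleted from each H_v (v ∈ S) and at most k − 1 vertices are deleted from each G_w (w ∈ T). Then every hitting set of B has size at least k(n − 2k + 2). -/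
open SimpleGraph

/-!
If `J` has fewer than `k * (n - 2k + 2)` vertices, then at most `n - 2k + 1` copies of `H` contain
`k` or more of them, so at least `2k - 1` copies contain at most `k - 1`, and likewise for the
copies of `G`. Deleting `J` itself from the union of these light copies gives an element of the
bramble that `J` misses.
-/

section

open scoped Finset

variable {α β : Type*}

lemma card_heavy_fibers_lt [DecidableEq β] (f : α → β) {s : Finset α} {k m : ℕ}
    (hs : #s < k * m) (t : Finset β) : #{b ∈ t | k ≤ #{a ∈ s | f a = b}} < m := by
  by_contra! hm
  obtain ⟨b, hb, hb_light⟩ := Finset.exists_card_fiber_lt_of_card_lt_mul (f := f)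
    (hs.trans_le ((Nat.mul_le_mul_left k hm).trans_eq (Nat.mul_comm ..)))
  exact hb_light.not_ge (Finset.mem_filter.1 hb).2

lemma exists_card_eq_forall_ncard_fiber_lt (f : α → β) {s : Finset α} {k m r : ℕ}
    (hs : #s < k * (m + 1)) (hβ : (r + m : ℕ) ≤ ENat.card β) :
    ∃ u : Finset β, #u = r ∧ ∀ b ∈ u, (↑s ∩ {a | f a = b}).ncard < k := by
  classical
  obtain ⟨t, ht⟩ := Cardinal.exists_finset_le_card β (r + m)
    (Cardinal.natCast_le_toENat.1 hβ)
  have heavy_lt := card_heavy_fibers_lt f hs t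
  have heavy_add_light := t.card_filter_add_card_filter_not fun b => k ≤ #{a ∈ s | f a = b}
  obtain ⟨u, hu_light, hu⟩ := Finset.exists_subset_card_eq
    (show r ≤ #{b ∈ t | ¬ k ≤ #{a ∈ s | f a = b}} by omega)
  refine ⟨u, hu, fun b hb => ?_⟩
  rw [← Set.sep_mem_eq]
  simpa [← Finset.coe_filter] using (Finset.mem_filter.1 (hu_light hb)).2

lemma disjoint_verts_brambleElt (G : SimpleGraph α) (H : SimpleGraph β) (S : Set α) (T : Set β)
    (D : Set (α × β)) : Disjoint D (brambleElt G H S T D).verts :=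
  Set.disjoint_sdiff_right

/-- The unions of `2k - 1` copies of `H` and `2k - 1` copies of `G` with at most `k - 1` vertices
deleted from each copy, a bramble when `G` and `H` are `k`-connected; it serves to state the bound
for graphs that may be infinite. The deleted set `D` is finite because `Set.ncard` is `0` on
infinite sets; nothing is lost, as only the vertices of `D` on the chosen copies matter. -/
def crossFamily (k : ℕ) (G : SimpleGraph α) (H : SimpleGraph β) : Set (G □ H).Subgraph :=
  {X | ∃ (S : Finset α) (T : Finset β) (D : Finset (α × β)),
    #S + 1 = 2 * k ∧ #T + 1 = 2 * k ∧
    (∀ v ∈ S, (↑D ∩ {p : α × β | p.1 = v}).ncard ≤ k - 1) ∧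
    (∀ w ∈ T, (↑D ∩ {p : α × β | p.2 = w}).ncard ≤ k - 1) ∧
    X = brambleElt G H S T D}

theorem hittingSet_card_ge_general {k n : ℕ} {G : SimpleGraph α} {H : SimpleGraph β}
    (hn : 2 * k ≤ n + 1) (hα : n ≤ ENat.card α) (hβ : n ≤ ENat.card β)
    {J : Finset (α × β)} (hJ : IsHittingSet (crossFamily k G H) ↑J) :
    k * (n + 2 - 2 * k) ≤ #J := by
  by_contra! hlt
  have hk : 0 < k := Nat.pos_of_lt_mul_right hlt
  obtain ⟨m, rfl⟩ := Nat.exists_eq_add_of_le (show 2 * k - 1 ≤ n by omega)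
  rw [show 2 * k - 1 + m + 2 - 2 * k = m + 1 by omega] at hlt
  obtain ⟨S, hS, hSJ⟩ := exists_card_eq_forall_ncard_fiber_lt Prod.fst hlt hα
  obtain ⟨T, hT, hTJ⟩ := exists_card_eq_forall_ncard_fiber_lt Prod.snd hlt hβ
  have hX : brambleElt G H S T J ∈ crossFamily k G H :=
    ⟨S, T, J, by omega, by omega, fun v hv => Nat.le_sub_one_of_lt (hSJ v hv),
      fun w hw => Nat.le_sub_one_of_lt (hTJ w hw), rfl⟩
  exact Set.not_disjoint_iff_nonempty_inter.2 (hJ _ hX) (disjoint_verts_brambleElt G H S T J)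

end

/-- Let `G` and `H` be `k`-connected graphs each with at least `n ≥ 2k - 1`
vertices, and let `B` be the bramble in `G □ H` consisting of all subgraphs
obtained from a union of copies `H_v` (`v ∈ S`, `|S| = 2k - 1`) and `G_w`
(`w ∈ T`, `|T| = 2k - 1`) by deleting at most `k - 1` vertices from each copy.
Then every hitting set of `B` has size at least `k * (n - 2 * k + 2)`. -/
theorem hittingSet_card_ge {α β : Type} [Fintype α] [Fintype β] (k n : ℕ)
    (G : SimpleGraph α) (H : SimpleGraph β)
    (hG : IsKConnected k G) (hH : IsKConnected k H)
    (hn : 2 * k ≤ n + 1)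
    (hGn : n ≤ Fintype.card α) (hHn : n ≤ Fintype.card β)
    (B : Set (G □ H).Subgraph)
    (hB : B = {X : (G □ H).Subgraph |
      ∃ (S : Finset α) (T : Finset β) (D : Set (α × β)),
        S.card + 1 = 2 * k ∧ T.card + 1 = 2 * k ∧
        (∀ v ∈ S, (D ∩ {p : α × β | p.1 = v}).ncard ≤ k - 1) ∧
        (∀ w ∈ T, (D ∩ {p : α × β | p.2 = w}).ncard ≤ k - 1) ∧
        X = brambleElt G H ↑S ↑T D})
    (J : Finset (α × β)) (hJ : IsHittingSet B ↑J) :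
    k * (n + 2 - 2 * k) ≤ J.card :=
  hittingSet_card_ge_general hn (by simpa using hGn) (by simpa using hHn)
    fun X ⟨S, T, D, hX⟩ => hJ X (hB ▸ ⟨S, T, D, hX⟩)
end

section
/- Let C_n be the cycle on n vertices, n ≥ 3. Then the treewidth of the toroidal grid C_n □ C_n is at most 2n. -/
open SimpleGraph

/-!
Numbering the vertices of a graph so that adjacent numbers differ by at most `b` and sliding a
window of `b + 1` consecutive numbers along the graph gives a path decomposition of width at most
`b`. A cycle has such a numbering with `b = 2`: fold it flat, so that its two halves interleave.
Replacing each vertex of the folded cycle by a block of `n` consecutive numbers then numbers the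
product of the cycle with any graph on `n` vertices, with `b = 2 * n`.
-/

section Hasse

variable {α : Type*}

theorem isAcyclic_hasse [LinearOrder α] : (hasse α).IsAcyclic := by
  have isBridge_of_covBy {a b : α} (hab : a ⋖ b) : (hasse α).IsBridge s(a, b) := by
    rw [isBridge_iff]
    rintro ⟨p⟩
    obtain ⟨⟨⟨x, y⟩, hxy⟩, -, hx, hy⟩ :=
      p.exists_boundary_dart (Set.Iic a) le_rfl (not_le.2 hab.lt)
    rw [Set.mem_Iic] at hx
    rw [Set.mem_Iic, not_le] at hy
    obtain ⟨hcov | hcov, hne⟩ := (deleteEdges_adj ..).1 hxy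
    · obtain rfl : x = a := hx.eq_of_not_lt fun hxa => hcov.2 hxa hy
      exact hne (by rw [hab.unique_right hcov, Set.mem_singleton_iff])
    · exact (hcov.lt.trans_le hx).not_gt hy
  rw [isAcyclic_iff_forall_adj_isBridge]
  rintro a b (hab | hba)
  · exact isBridge_of_covBy hab
  · rw [Sym2.eq_swap]
    exact isBridge_of_covBy hba

theorem isTree_hasse [LinearOrder α] [SuccOrder α] [IsSuccArchimedean α] [Nonempty α] :
    (hasse α).IsTree :=
  ⟨⟨hasse_preconnected_of_succ α⟩, isAcyclic_hasse⟩

theorem induce_hasse [Preorder α] (s : Set α) [s.OrdConnected] :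
    (hasse α).induce s = hasse s := by
  have ordConnected_range : (Set.range (OrderEmbedding.subtype (· ∈ s))).OrdConnected := by
    simpa using ‹s.OrdConnected›
  have covBy_iff (x y : s) : (x : α) ⋖ y ↔ x ⋖ y :=
    ordConnected_range.apply_covBy_apply_iff
  ext x y
  simp only [comap_adj, Function.Embedding.subtype_apply, hasse_adj, covBy_iff]

theorem connected_induce_hasse [LinearOrder α] [SuccOrder α] [IsSuccArchimedean α] {s : Set α}
    (hs : s.OrdConnected) (hne : s.Nonempty) : ((hasse α).induce s).Connected := by
  have := hne.to_subtype
  rw [induce_hasse]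
  exact ⟨hasse_preconnected_of_succ s⟩

end Hasse

/-- The path decomposition with bags `bag i`, in the order of the finite linear order `ι`. -/
def TreeDecomposition.ofLinearOrder {V : Type*} {G : SimpleGraph V} {ι : Type} [Fintype ι]
    [LinearOrder ι] [SuccOrder ι] [Nonempty ι] (bag : ι → Finset V)
    (covers_edge : ∀ ⦃v w : V⦄, G.Adj v w → ∃ i, v ∈ bag i ∧ w ∈ bag i)
    (nonempty : ∀ v, {i | v ∈ bag i}.Nonempty)
    (ordConnected : ∀ v, {i | v ∈ bag i}.OrdConnected) : TreeDecomposition G where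
  ι := ι
  fintype_ι := inferInstance
  tree := hasse ι
  isTree := isTree_hasse
  bag := bag
  covers_edge := covers_edge
  support_connected v := connected_induce_hasse (ordConnected v) (nonempty v)

theorem treewidth_le_of_card_bag_le {V : Type*} {G : SimpleGraph V} {k : ℕ}
    (d : TreeDecomposition G) (hd : ∀ i, (d.bag i).card ≤ k + 1) : treewidth G ≤ k := by
  let := d.fintype_ι
  calc
    treewidth G ≤ d.width := Nat.sInf_le ⟨d, rfl⟩
    _ ≤ k := Nat.sub_le_of_le_add (Finset.sup_le fun i _ => hd i)

/-- `G` has bandwidth at most `b`: its vertices can be given distinct numbers so that the numbers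
of adjacent vertices differ by at most `b`. As adjacency is symmetric, bounding the difference on
one side suffices. -/
def BandwidthLE {V : Type*} (G : SimpleGraph V) (b : ℕ) : Prop :=
  ∃ f : V → ℕ, f.Injective ∧ ∀ ⦃v w : V⦄, G.Adj v w → f w ≤ f v + b

section Window

variable {V : Type*} [Fintype V]

/-- The vertices whose number under `f` lies in the window `{i, …, i + b}`; these are the bags of
the path decomposition belonging to a numbering `f`. -/
def window (f : V → ℕ) (b i : ℕ) : Finset V :=
  {v | f v ∈ Finset.Icc i (i + b)}

theorem mem_window {f : V → ℕ} {b i : ℕ} {v : V} : v ∈ window f b i ↔ i ≤ f v ∧ f v ≤ i + b := by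
  simp [window]

theorem card_window_le {f : V → ℕ} (hf : f.Injective) (b i : ℕ) :
    (window f b i).card ≤ b + 1 :=
  calc
    (window f b i).card ≤ (Finset.Icc i (i + b)).card :=
      Finset.card_le_card_of_injOn f (fun v hv => by simpa [window] using hv) hf.injOn
    _ = b + 1 := by rw [Nat.card_Icc]; omega

end Window

theorem treewidth_le_of_bandwidthLE {V : Type*} [Finite V] {G : SimpleGraph V} {b : ℕ}
    (hG : BandwidthLE G b) : treewidth G ≤ b := by
  obtain ⟨f, f_injective, f_adj⟩ := hG
  have := Fintype.ofFinite V
  obtain ⟨N, hN⟩ : ∃ N, ∀ v, f v < N + 1 :=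
    ⟨Finset.univ.sup f, fun v => Nat.lt_succ_of_le (Finset.le_sup (Finset.mem_univ v))⟩
  let bag (i : Fin (N + 1)) : Finset V := window f b i
  have mem_bag_self (v : V) : v ∈ bag ⟨f v, hN v⟩ := by simp [bag, mem_window]
  have covers_edge ⦃v w : V⦄ (h : G.Adj v w) : ∃ i, v ∈ bag i ∧ w ∈ bag i := by
    rcases le_total (f v) (f w) with hvw | hwv
    · exact ⟨⟨f v, hN v⟩, mem_bag_self v, mem_window.2 ⟨hvw, f_adj h⟩⟩
    · exact ⟨⟨f w, hN w⟩, mem_window.2 ⟨hwv, f_adj h.symm⟩, mem_bag_self w⟩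
  have ordConnected (v : V) : {i | v ∈ bag i}.OrdConnected := by
    refine ⟨fun i hi j hj k hk => mem_window.2 ?_⟩
    have hi := mem_window.1 hi
    have hj := mem_window.1 hj
    have hik : i.val ≤ k.val := hk.1
    have hkj : k.val ≤ j.val := hk.2
    omega
  exact treewidth_le_of_card_bag_le
    (.ofLinearOrder bag covers_edge (fun v => ⟨_, mem_bag_self v⟩) ordConnected)
    fun i => card_window_le f_injective b i.val

theorem BandwidthLE.boxProd {V W : Type*} [Finite W] {G : SimpleGraph V} {b : ℕ}
    (hG : BandwidthLE G b) (hb : 0 < b) (H : SimpleGraph W) :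
    BandwidthLE (G □ H) (b * Nat.card W) := by
  obtain ⟨f, f_injective, f_adj⟩ := hG
  let e := Finite.equivFin W
  refine ⟨fun x => f x.1 * Nat.card W + e x.2, fun x y hxy => ?_, ?_⟩
  · have : NeZero (Nat.card W) := ⟨(Fin.pos (e x.2)).ne'⟩
    have := (Nat.divModEquiv (Nat.card W)).symm.injective
      (a₁ := (f x.1, e x.2)) (a₂ := (f y.1, e y.2)) hxy
    exact f_injective.prodMap e.injective this
  · rintro ⟨v, w⟩ ⟨v', w'⟩ (⟨hadj, rfl : w = w'⟩ | ⟨-, rfl : v = v'⟩)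
    · calc
        f v' * Nat.card W + e w ≤ (f v + b) * Nat.card W + e w := by gcongr; exact f_adj hadj
        _ = f v * Nat.card W + e w + b * Nat.card W := by ring
    · calc
        f v * Nat.card W + e w' ≤ f v * Nat.card W + 1 * Nat.card W := by
          rw [one_mul]
          gcongr
          exact (e w').is_le'
        _ ≤ f v * Nat.card W + e w + b * Nat.card W := by
          gcongr
          · exact Nat.le_add_right ..
          · exact hb

theorem val_of_cycleGraph_adj {m : ℕ} {i j : Fin m} (hij : (cycleGraph m).Adj i j) :
    i.val + 1 = j.val ∨ j.val + 1 = i.val ∨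
      (i.val = 0 ∧ j.val + 1 = m) ∨ (j.val = 0 ∧ i.val + 1 = m) := by
  have val_of_val_sub_eq_one {k l : Fin m} (h : (k - l).val = 1) :
      l.val + 1 = k.val ∨ (k.val = 0 ∧ l.val + 1 = m) := by
    rcases le_or_gt l k with hle | hlt
    · rw [Fin.sub_val_of_le hle] at h
      omega
    · rw [Fin.coe_sub_iff_lt.2 hlt] at h
      omega
  rcases cycleGraph_adj'.1 hij with h | h
  · rcases val_of_val_sub_eq_one h with h | h <;> simp [h]
  · rcases val_of_val_sub_eq_one h with h | h <;> simp [h]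

/-- The numbering of `Fin m` that folds a cycle flat: `0, 1, 2, …` receive the even numbers
`0, 2, 4, …`, and `m - 1, m - 2, …` the odd numbers `1, 3, …`. -/
def foldNumbering (m : ℕ) (i : Fin m) : ℕ :=
  if 2 * i.val < m then 2 * i.val else 2 * (m - i.val) - 1

theorem foldNumbering_injective (m : ℕ) : (foldNumbering m).Injective := by
  intro i j hij
  unfold foldNumbering at hij
  grind

theorem bandwidthLE_cycleGraph (m : ℕ) : BandwidthLE (cycleGraph m) 2 := by
  refine ⟨foldNumbering m, foldNumbering_injective m, fun i j hij => ?_⟩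
  have := val_of_cycleGraph_adj hij
  unfold foldNumbering
  grind

theorem treewidth_cycle_boxProd_le_general {W : Type*} [Finite W] (m : ℕ) (H : SimpleGraph W) :
    treewidth (cycleGraph m □ H) ≤ 2 * Nat.card W :=
  treewidth_le_of_bandwidthLE ((bandwidthLE_cycleGraph m).boxProd two_pos H)

/-- The treewidth of the toroidal grid `C_n □ C_n` is at most `2 * n`. -/
theorem treewidth_cycle_boxProd_le (n : ℕ) (hn : 3 ≤ n) :
    treewidth (cycleGraph n □ cycleGraph n) ≤ 2 * n := by
  simpa using treewidth_cycle_boxProd_le_general n (cycleGraph n)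
end
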